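/- arXiv:0810.4282 — 3 statements merged into one kernel-verified Lean document; each statement's English description precedes it below -/
import Mathlib

section
/- Let ψ be a Schwartz function on ℝ³, and for t ∈ ℝ let e^{itΔ}ψ denote its free Schrödinger evolution. Then ∫_ℝ ∫_{ℝ³} |x|^{-2} |(e^{itΔ}ψ)(x)|² dx dt ≤ π ∫_{ℝ³} |ψ(x)|² dx. -/
open MeasureTheory
open scoped FourierTransform ENNReal

/-!
Write `f = 𝓕 ψ`, so that `u(t, x) = ∫ e^{i θ(t, x, ξ)} f(ξ) dξ` with
`θ = 2π⟪ξ, x⟫ - 4π² t |ξ|²` (`planeWave`).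

Insert a Gaussian window `e^{-π t² / b²}` in time and write the Coulomb-type weight as a
superposition of Gaussians, `|x|⁻² = ∫₀^∞ 2π a⁻³ e^{-π |x|² / a²} da` (`inv_sq_eq_lintegral`).
For fixed `a, b > 0` everything is absolutely integrable, so Fubini and the Fourier transform of
the Gaussian turn the windowed space-time integral of `|u|²` into a double integral of
`f(ξ) conj f(η)` against the positive kernel
`b e^{-π b² (2π (|ξ|² - |η|²))²} · a³ e^{-π a² |ξ - η|²}` (`windowed_mass_le`).
Integrating in `a` replaces the spatial factor by `π / |ξ - η|`, the Fourier transform of `|x|⁻²`;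
the resulting kernel is `energyCoulombKernel b`.

This kernel is symmetric, so by Schur's test (`schur_symm_le`) it remains to bound
`∫ energyCoulombKernel b ξ η dη` by `π`. By Newton's shell theorem the spherical average of
`|ξ - η|⁻¹` over `|η| = r` is at most `1 / r`, whence
`∫ F(|η|²) / |ξ - η| dη ≤ 2π ∫ F(s) ds` (`newton_radial_le`). Applied to the energy Gaussian, whose
integral in `s = |η|²` is `1 / (2π)`, this gives exactly `π`, for every `b`. Letting `b → ∞`
removes the time window by Fatou's lemma, and Plancherel identifies `‖f‖₂` with `‖ψ‖₂`.
-/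

/-! ### One-dimensional integrals -/

open Set Real in
lemma lintegral_exp_neg_mul_Ioi {c : ℝ} (hc : 0 < c) :
    ∫⁻ y in Ioi (0 : ℝ), ENNReal.ofReal (π * exp (-c * y)) = ENNReal.ofReal (π * c⁻¹) := by
  rw [← ofReal_integral_eq_lintegral_ofReal]
  · rw [integral_const_mul, integral_exp_mul_Ioi (by linarith)]
    congr 1; simp
  · exact ((integrableOn_exp_mul_Ioi (by linarith) 0)).const_mul _
  · exact Filter.Eventually.of_forall fun y => by positivity

open Set Real in
/-- The weight `r⁻²` as a superposition of Gaussians. The scale parameter `a` is chosen so that the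
Fourier transform of the Gaussian, `a³ e^{-π a² |w|²}`, carries a factor cancelling the density
`a⁻³` (`lintegral_gaussian_scale`). -/
lemma inv_sq_eq_lintegral {r : ℝ} (hr : 0 < r) :
    ENNReal.ofReal (r⁻¹ ^ 2) =
      ∫⁻ a in Ioi (0 : ℝ), ENNReal.ofReal (2 * π * a⁻¹ ^ 3 * exp (-π * a⁻¹ ^ 2 * r ^ 2)) := by
  -- substitute `y = a⁻²` in `∫₀^∞ π e^{-π r² y} dy`
  have him : (fun a : ℝ => a⁻¹ ^ 2) '' Ioi 0 = Ioi 0 := by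
    ext y
    simp only [mem_image, mem_Ioi]
    constructor
    · rintro ⟨a, ha, rfl⟩; positivity
    · intro hy
      exact ⟨(√y)⁻¹, by positivity, by simp [hy.le]⟩
  have hd : ∀ a ∈ Ioi (0 : ℝ),
      HasDerivWithinAt (fun a : ℝ => a⁻¹ ^ 2) (-(2 * a⁻¹ ^ 3)) (Ioi 0) a := by
    intro a ha
    have ha : a ≠ 0 := (mem_Ioi.1 ha).ne'
    have := ((hasDerivAt_inv ha).pow 2).hasDerivWithinAt (s := Ioi 0)
    convert! this using 1
    push_cast
    field_simp
  have hanti : AntitoneOn (fun a : ℝ => a⁻¹ ^ 2) (Ioi 0) := by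
    intro a ha b hb hab
    have ha : 0 < a := ha
    have hb : 0 < b := hb
    dsimp only
    gcongr
  have h1 := lintegral_image_eq_lintegral_deriv_mul_of_antitoneOn measurableSet_Ioi hd hanti
    (fun y => ENNReal.ofReal (π * exp (-(π * r ^ 2) * y)))
  rw [him, lintegral_exp_neg_mul_Ioi (by positivity)] at h1
  convert h1 using 1
  · congr 1; field_simp
  · refine setLIntegral_congr_fun measurableSet_Ioi fun a ha => ?_
    have ha : 0 < a := ha
    simp only [neg_neg]
    rw [← ENNReal.ofReal_mul (by positivity)]
    congr 1
    ring_nf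

open Set Real in
lemma lintegral_gaussian_scale {r : ℝ} (hr : 0 < r) :
    ∫⁻ a in Ioi (0 : ℝ), ENNReal.ofReal (2 * π * exp (-π * a ^ 2 * r ^ 2)) =
      ENNReal.ofReal (π * r⁻¹) := by
  have hb : 0 < π * r ^ 2 := by positivity
  have e : ∀ a : ℝ, -π * a ^ 2 * r ^ 2 = -(π * r ^ 2) * a ^ 2 := fun a => by ring
  simp only [e]
  rw [← ofReal_integral_eq_lintegral_ofReal]
  · rw [integral_const_mul, integral_gaussian_Ioi]
    congr 1
    rw [show π / (π * r ^ 2) = (r⁻¹) ^ 2 by field_simp, sqrt_sq (by positivity)]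
    ring
  · exact ((integrable_exp_neg_mul_sq hb).integrableOn).const_mul _
  · exact Filter.Eventually.of_forall fun y => by positivity

open Real in
/-- The Gaussian in the energy variable `s`, produced by the Fourier transform in time of the window
`e^{-π t² / b²}`, has mass `1 / (2π)` independently of its width and centre. -/
lemma lintegral_gaussian_energy {b : ℝ} (hb : 0 < b) (m : ℝ) :
    ∫⁻ s : ℝ, ENNReal.ofReal (b * exp (-π * b ^ 2 * (2 * π * (m - s)) ^ 2)) =
      ENNReal.ofReal ((2 * π)⁻¹) := by
  have hb' : 0 < π * b ^ 2 * (2 * π) ^ 2 := by positivity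
  have e : ∀ a : ℝ, -π * b ^ 2 * (2 * π * (m - a)) ^ 2 =
      -(π * b ^ 2 * (2 * π) ^ 2) * (m - a) ^ 2 := fun a => by ring
  simp only [e]
  rw [lintegral_sub_left_eq_self
    (fun s => ENNReal.ofReal (b * exp (-(π * b ^ 2 * (2 * π) ^ 2) * s ^ 2))) m]
  rw [← ofReal_integral_eq_lintegral_ofReal]
  · rw [integral_const_mul, integral_gaussian]
    congr 1
    rw [show π / (π * b ^ 2 * (2 * π) ^ 2) = ((b * (2 * π))⁻¹) ^ 2 by field_simp,
      sqrt_sq (by positivity)]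
    field_simp
  · exact (integrable_exp_neg_mul_sq hb').const_mul _
  · exact Filter.Eventually.of_forall fun y => by positivity

/-! ### Newton's shell theorem, in integrated form -/

open Set Real in
lemma lintegral_radial_plane {h : ℝ → ℝ≥0∞} (hh : Measurable h) :
    ∫⁻ p : ℝ × ℝ, h (p.1 ^ 2 + p.2 ^ 2) = ENNReal.ofReal π * ∫⁻ w in Ioi (0 : ℝ), h w := by
  rw [← lintegral_comp_polarCoord_symm]
  have e : ∀ p : ℝ × ℝ, h ((polarCoord.symm p).1 ^ 2 + (polarCoord.symm p).2 ^ 2) =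
      h (p.1 ^ 2) := by
    intro p
    simp only [polarCoord_symm_apply]
    congr 1
    linear_combination p.1 ^ 2 * (cos_sq_add_sin_sq p.2)
  simp only [e, smul_eq_mul]
  rw [polarCoord_target, Measure.volume_eq_prod, setLIntegral_prod _ (by fun_prop)]
  simp only [lintegral_const, Measure.restrict_apply MeasurableSet.univ, univ_inter, volume_Ioo]
  have him : (fun a : ℝ => a ^ 2) '' Ioi 0 = Ioi 0 := by
    ext y
    simp only [mem_image, mem_Ioi]
    constructor
    · rintro ⟨a, ha, rfl⟩; positivity
    · intro hy
      exact ⟨√y, by positivity, by simp [hy.le]⟩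
  have hd : ∀ a ∈ Ioi (0 : ℝ),
      HasDerivWithinAt (fun a : ℝ => a ^ 2) (2 * a) (Ioi 0) a := by
    intro a ha
    simpa using (hasDerivAt_pow 2 a).hasDerivWithinAt (s := Ioi 0)
  have hmono : MonotoneOn (fun a : ℝ => a ^ 2) (Ioi 0) := by
    intro a ha b hb hab
    have ha : 0 < a := ha
    dsimp only
    gcongr
  have h1 := lintegral_image_eq_lintegral_deriv_mul_of_monotoneOn measurableSet_Ioi hd hmono h
  rw [him] at h1
  rw [h1, ← lintegral_const_mul _ (by fun_prop)]
  refine setLIntegral_congr_fun measurableSet_Ioi fun a ha => ?_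
  have ha : 0 < a := ha
  have : ENNReal.ofReal (π - -π) * ENNReal.ofReal a
      = ENNReal.ofReal π * ENNReal.ofReal (2 * a) := by
    rw [← ENNReal.ofReal_mul (by linarith [pi_pos]), ← ENNReal.ofReal_mul pi_pos.le]
    ring_nf
  calc _ = (ENNReal.ofReal (π - -π) * ENNReal.ofReal a) * h (a ^ 2) := by ring
    _ = _ := by rw [this]; ring

open Set Real in
/-- Archimedes' hat-box form of Newton's theorem: `s - 2ρz + ρ²` is the squared distance from a
point at distance `ρ` on the axis to the points of height `z` on the sphere of radius `√s`. The
exact value of the integral is `2 min(√s, ρ) / ρ` for `ρ > 0`. The excluded case `s = ρ²`, where the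
integrand is singular at an endpoint, is a null set of energies. -/
lemma lintegral_chord_le {ρ s : ℝ} (hρ : 0 ≤ ρ) (hs : 0 < s) (hne : s ≠ ρ ^ 2) :
    ∫⁻ z in {z : ℝ | z ^ 2 < s}, ENNReal.ofReal ((√(s - 2 * ρ * z + ρ ^ 2))⁻¹) ≤ 2 := by
  have hset : {z : ℝ | z ^ 2 < s} = Ioo (-√s) (√s) := by
    ext z
    simp only [mem_ofPred_eq, mem_Ioo]
    rw [← abs_lt, ← sqrt_sq_eq_abs]
    exact (sqrt_lt_sqrt_iff (sq_nonneg z)).symm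
  rw [hset]
  have hsq : √s ^ 2 = s := sq_sqrt hs.le
  have hs0 : 0 < √s := sqrt_pos.2 hs
  rcases hρ.eq_or_lt with rfl | hρ
  · simp only [mul_zero, zero_mul, sub_zero, ne_eq, OfNat.ofNat_ne_zero, not_false_eq_true,
      zero_pow, add_zero, lintegral_const, Measure.restrict_apply MeasurableSet.univ, univ_inter,
      volume_Ioo]
    rw [← ENNReal.ofReal_mul (by positivity), ← ENNReal.ofReal_ofNat 2]
    apply ENNReal.ofReal_le_ofReal
    apply le_of_eq
    field_simp
    ring
  · have hpos : ∀ z ∈ Icc (-√s) (√s), 0 < s - 2 * ρ * z + ρ ^ 2 := by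
      intro z hz
      have h1 : √s ≠ ρ := by
        intro h; apply hne; rw [← h, hsq]
      have h2 : 0 < (√s - ρ) ^ 2 := by
        have := sub_ne_zero.2 h1
        positivity
      nlinarith [mul_le_mul_of_nonneg_left hz.2 hρ.le]
    have hle : -√s ≤ √s := by linarith
    have hcont : ContinuousOn (fun z => (√(s - 2 * ρ * z + ρ ^ 2))⁻¹) (Icc (-√s) (√s)) := by
      apply ContinuousOn.inv₀ (by fun_prop)
      intro z hz
      exact (sqrt_pos.2 (hpos z hz)).ne'
    have hd : ∀ z ∈ uIcc (-√s) (√s), HasDerivAt (fun z => -ρ⁻¹ * √(s - 2 * ρ * z + ρ ^ 2))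
        ((√(s - 2 * ρ * z + ρ ^ 2))⁻¹) z := by
      intro z hz
      rw [uIcc_of_le hle] at hz
      have h0 : HasDerivAt (fun z => s - 2 * ρ * z + ρ ^ 2) (-(2 * ρ)) z := by
        have := (((hasDerivAt_id z).const_mul (2 * ρ)).const_sub s).add_const (ρ ^ 2)
        simpa using this
      have := (h0.sqrt (hpos z hz).ne').const_mul (-ρ⁻¹)
      convert! this using 1
      have := (sqrt_pos.2 (hpos z hz)).ne'
      field_simp
    have hint : IntervalIntegrable (fun z => (√(s - 2 * ρ * z + ρ ^ 2))⁻¹) volume (-√s) (√s) :=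
      ContinuousOn.intervalIntegrable (by rwa [uIcc_of_le hle])
    rw [setLIntegral_congr Ioo_ae_eq_Ioc, ← ofReal_integral_eq_lintegral_ofReal
      ((intervalIntegrable_iff_integrableOn_Ioc_of_le hle).1 hint)
      (Filter.Eventually.of_forall fun y => by positivity),
      ← intervalIntegral.integral_of_le hle, intervalIntegral.integral_eq_sub_of_hasDerivAt hd hint,
      ← ENNReal.ofReal_ofNat 2]
    apply ENNReal.ofReal_le_ofReal
    rw [show s - 2 * ρ * √s + ρ ^ 2 = (√s - ρ) ^ 2 by linear_combination -hsq,
      show s - 2 * ρ * -√s + ρ ^ 2 = (√s + ρ) ^ 2 by linear_combination -hsq,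
      sqrt_sq (show 0 ≤ √s + ρ by positivity), sqrt_sq_eq_abs]
    have h3 : √s + ρ - |√s - ρ| ≤ 2 * ρ := by linarith [le_abs_self (√s - ρ)]
    calc _ = ρ⁻¹ * (√s + ρ - |√s - ρ|) := by ring
      _ ≤ ρ⁻¹ * (2 * ρ) := by gcongr
      _ = 2 := by field_simp

/-- `ℝ³` split as an axis times a plane, together with the distance to points of the axis in these
coordinates. -/
lemma exists_axis_plane :
    ∃ Θ : EuclideanSpace ℝ (Fin 3) → ℝ × (ℝ × ℝ), MeasurePreserving Θ ∧
      ∀ η, ∀ ρ : ℝ, ‖ρ • EuclideanSpace.single (0 : Fin 3) (1 : ℝ) - η‖ ^ 2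
        = (ρ - (Θ η).1) ^ 2 + ((Θ η).2.1 ^ 2 + (Θ η).2.2 ^ 2) := by
  have h1 := EuclideanSpace.volume_preserving_symm_measurableEquiv_toLp (Fin 3)
  have h2 := volume_preserving_piFinSuccAbove (fun _ : Fin 3 => ℝ) 0
  have h3 := (MeasurePreserving.id (volume : Measure ℝ)).prod (volume_preserving_finTwoArrow ℝ)
  refine ⟨_, h3.comp (h2.comp h1), fun η ρ => ?_⟩
  rw [EuclideanSpace.norm_sq_eq, Fin.sum_univ_three]
  simp [MeasurableEquiv.piFinSuccAbove, MeasurableEquiv.finTwoArrow]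
  rw [add_assoc]
  rfl

lemma exists_rotation (ξ : EuclideanSpace ℝ (Fin 3)) :
    ∃ R : EuclideanSpace ℝ (Fin 3) ≃ₗᵢ[ℝ] EuclideanSpace ℝ (Fin 3),
      R (‖ξ‖ • EuclideanSpace.single (0 : Fin 3) (1 : ℝ)) = ξ := by
  refine ⟨_, Submodule.reflection_sub ?_⟩
  simp [norm_smul]

open Set Real in
/-- The Newton potential at `ξ` of a radial density `F(|η|²)` is at most its potential at the
origin, which is `2π ∫₀^∞ F(s) ds`; the bound is stated with the integral over all of `ℝ`. -/
lemma newton_radial_le {F : ℝ → ℝ≥0∞} (hF : Measurable F) (ξ : EuclideanSpace ℝ (Fin 3)) :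
    ∫⁻ η : EuclideanSpace ℝ (Fin 3), F (‖η‖ ^ 2) * ENNReal.ofReal (‖ξ - η‖⁻¹) ≤
      ENNReal.ofReal (2 * π) * ∫⁻ s, F s := by
  obtain ⟨R, hR⟩ := exists_rotation ξ
  obtain ⟨Θ, hΘ, hn⟩ := exists_axis_plane
  set ρ := ‖ξ‖ with hρ
  have hρ0 : 0 ≤ ρ := norm_nonneg ξ
  -- rotate `ξ` onto the axis
  rw [← R.measurePreserving.lintegral_comp_emb R.toHomeomorph.measurableEmbedding]
  have e1 : ∀ η, F (‖R η‖ ^ 2) * ENNReal.ofReal (‖ξ - R η‖⁻¹) =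
      F ((Θ η).1 ^ 2 + ((Θ η).2.1 ^ 2 + (Θ η).2.2 ^ 2)) * ENNReal.ofReal
        ((√((ρ - (Θ η).1) ^ 2 + ((Θ η).2.1 ^ 2 + (Θ η).2.2 ^ 2)))⁻¹) := by
    intro η
    rw [← hn, sqrt_sq (norm_nonneg _), R.norm_map]
    conv_lhs => rw [← hR, ← map_sub, R.norm_map]
    have := hn η 0
    simp only [zero_smul, zero_sub, norm_neg, neg_sq] at this
    rw [this]
  simp only [e1]
  rw [hΘ.lintegral_comp (f := fun q : ℝ × (ℝ × ℝ) => F (q.1 ^ 2 + (q.2.1 ^ 2 + q.2.2 ^ 2)) *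
    ENNReal.ofReal ((√((ρ - q.1) ^ 2 + (q.2.1 ^ 2 + q.2.2 ^ 2)))⁻¹)) (by fun_prop),
    Measure.volume_eq_prod, lintegral_prod _ (by fun_prop)]
  -- polar coordinates in the plane, then the energy `s = z² + w` as variable
  have e2 : ∀ z : ℝ, ∫⁻ p : ℝ × ℝ, F (z ^ 2 + (p.1 ^ 2 + p.2 ^ 2)) *
      ENNReal.ofReal ((√((ρ - z) ^ 2 + (p.1 ^ 2 + p.2 ^ 2)))⁻¹) =
      ENNReal.ofReal π * ∫⁻ s, (Ioi (z ^ 2)).indicator (fun s => F s *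
        ENNReal.ofReal ((√(s - 2 * ρ * z + ρ ^ 2))⁻¹)) s := by
    intro z
    rw [lintegral_radial_plane (h := fun w => F (z ^ 2 + w) *
      ENNReal.ofReal ((√((ρ - z) ^ 2 + w))⁻¹)) (by fun_prop)]
    congr 1
    rw [← lintegral_indicator measurableSet_Ioi,
      ← lintegral_sub_right_eq_self _ (z ^ 2)]
    refine lintegral_congr fun s => ?_
    by_cases hs : z ^ 2 < s
    · rw [indicator_of_mem (show s - z ^ 2 ∈ Ioi 0 by simpa using hs),
        indicator_of_mem (show s ∈ Ioi (z ^ 2) from hs)]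
      ring_nf
    · rw [indicator_of_notMem (show s - z ^ 2 ∉ Ioi 0 by simpa using hs),
        indicator_of_notMem (show s ∉ Ioi (z ^ 2) from hs)]
  simp only [e2]
  have hm : Measurable (Function.uncurry fun z s : ℝ => (Ioi (z ^ 2)).indicator (fun s => F s *
        ENNReal.ofReal ((√(s - 2 * ρ * z + ρ ^ 2))⁻¹)) s) := by
    have : (Function.uncurry fun z s : ℝ => (Ioi (z ^ 2)).indicator (fun s => F s *
        ENNReal.ofReal ((√(s - 2 * ρ * z + ρ ^ 2))⁻¹)) s) =
        {q : ℝ × ℝ | q.1 ^ 2 < q.2}.indicator (fun q => F q.2 *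
          ENNReal.ofReal ((√(q.2 - 2 * ρ * q.1 + ρ ^ 2))⁻¹)) := by
      ext ⟨z, s⟩
      simp [Function.uncurry, indicator]
    rw [this]
    exact Measurable.indicator (by fun_prop) (measurableSet_lt (by fun_prop) (by fun_prop))
  rw [lintegral_const_mul _ (by exact hm.lintegral_prod_right),
    lintegral_lintegral_swap hm.aemeasurable]
  have e3 : ∀ᵐ s : ℝ, ∫⁻ z : ℝ, (Ioi (z ^ 2)).indicator (fun s => F s *
        ENNReal.ofReal ((√(s - 2 * ρ * z + ρ ^ 2))⁻¹)) s ≤ F s * 2 := by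
    have hae : ∀ᵐ s : ℝ, s ≠ ρ ^ 2 := by simp [ae_iff]
    filter_upwards [hae] with s hs
    have e4 : ∀ z : ℝ, (Ioi (z ^ 2)).indicator (fun s => F s *
        ENNReal.ofReal ((√(s - 2 * ρ * z + ρ ^ 2))⁻¹)) s = F s *
        {z : ℝ | z ^ 2 < s}.indicator (fun z =>
          ENNReal.ofReal ((√(s - 2 * ρ * z + ρ ^ 2))⁻¹)) z := by
      intro z
      by_cases h : z ^ 2 < s <;> simp [indicator, h]
    simp only [e4]
    have hms : MeasurableSet {z : ℝ | z ^ 2 < s} :=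
      measurableSet_lt (by fun_prop) (by fun_prop)
    rw [lintegral_const_mul _ (Measurable.indicator (by fun_prop) hms),
      lintegral_indicator hms]
    gcongr
    rcases lt_or_ge 0 s with h | h
    · exact lintegral_chord_le hρ0 h hs
    · have : {z : ℝ | z ^ 2 < s} = ∅ := by
        ext z; simpa using h.trans (sq_nonneg z)
      simp [this]
  calc _ ≤ ENNReal.ofReal π * ∫⁻ s, F s * 2 := by gcongr 1; exact lintegral_mono_ae e3
    _ = _ := by
      rw [lintegral_mul_const _ hF, mul_comm 2 π, ENNReal.ofReal_mul pi_pos.le,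
        ENNReal.ofReal_ofNat]
      ring

/-! ### The windowed space-time integral on the Fourier side -/

open Complex in
lemma integral_gaussian_mul_phase {V : Type*} [NormedAddCommGroup V] [InnerProductSpace ℝ V]
    [FiniteDimensional ℝ V] [MeasurableSpace V] [BorelSpace V] {a : ℝ} (ha : 0 < a) (w : V) :
    ∫ v : V, ((Real.exp (-Real.pi * a⁻¹ ^ 2 * ‖v‖ ^ 2) : ℝ) : ℂ) *
        cexp ((2 * Real.pi * inner ℝ w v : ℝ) * I) =
      ((a ^ Module.finrank ℝ V * Real.exp (-Real.pi * a ^ 2 * ‖w‖ ^ 2) : ℝ) : ℂ) := by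
  have hπ := Real.pi_pos
  have hb : 0 < (((Real.pi * a⁻¹ ^ 2 : ℝ) : ℂ)).re := by rw [ofReal_re]; positivity
  have h := GaussianFourier.integral_cexp_neg_mul_sq_norm_add (V := V) hb
    (2 * Real.pi * I) w
  convert! h using 1
  · refine integral_congr_ae (Filter.Eventually.of_forall fun v => ?_)
    simp only
    rw [ofReal_exp, ← Complex.exp_add]
    congr 1
    push_cast
    ring
  · have h1 : (Real.pi / ((Real.pi * a⁻¹ ^ 2 : ℝ) : ℂ)) ^ (Module.finrank ℝ V / 2 : ℂ) =
        ((a ^ Module.finrank ℝ V : ℝ) : ℂ) := by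
      rw [← ofReal_div, show Real.pi / (Real.pi * a⁻¹ ^ 2) = a ^ 2 by field_simp,
        show (Module.finrank ℝ V / 2 : ℂ) = ((Module.finrank ℝ V / 2 : ℝ) : ℂ) by push_cast; rfl,
        ← ofReal_cpow (by positivity)]
      congr 1
      rw [← Real.rpow_natCast a 2, ← Real.rpow_mul ha.le, ← Real.rpow_natCast]
      congr 1
      push_cast
      ring
    rw [h1, ofReal_mul, ofReal_exp]
    congr 2
    push_cast
    have h2 : (Real.pi : ℂ) ≠ 0 := by exact_mod_cast hπ.ne'
    have h3 : (a : ℂ) ≠ 0 := by exact_mod_cast ha.ne'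
    field_simp
    rw [I_sq]
    ring

lemma integrable_gaussian_norm {V : Type*} [NormedAddCommGroup V] [InnerProductSpace ℝ V]
    [FiniteDimensional ℝ V] [MeasurableSpace V] [BorelSpace V] {a : ℝ} (ha : 0 < a) :
    Integrable fun v : V => Real.exp (-Real.pi * a⁻¹ ^ 2 * ‖v‖ ^ 2) := by
  have hπ := Real.pi_pos
  have hb : 0 < (((Real.pi * a⁻¹ ^ 2 : ℝ) : ℂ)).re := by rw [Complex.ofReal_re]; positivity
  have h := (GaussianFourier.integrable_cexp_neg_mul_sq_norm_add (V := V) hb 0 0).norm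
  convert! h using 2 with v
  rw [Complex.norm_exp]
  congr 1
  simp [← Complex.ofReal_pow, ← Complex.ofReal_mul]

/-- The plane wave `e^{2πi⟪ξ, x⟫ - 4π² i t |ξ|²}` of frequency `ξ` solving the free Schrödinger
equation, at the space-time point `p = (t, x)`. -/
noncomputable def planeWave (p : ℝ × EuclideanSpace ℝ (Fin 3)) (ξ : EuclideanSpace ℝ (Fin 3)) : ℂ :=
  Complex.exp ((2 * Real.pi * inner ℝ ξ p.2 - 4 * Real.pi ^ 2 * p.1 * ‖ξ‖ ^ 2 : ℝ) * Complex.I)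

lemma norm_planeWave (p : ℝ × EuclideanSpace ℝ (Fin 3)) (ξ : EuclideanSpace ℝ (Fin 3)) :
    ‖planeWave p ξ‖ = 1 := Complex.norm_exp_ofReal_mul_I _

lemma continuous_planeWave : Continuous fun r : (ℝ × EuclideanSpace ℝ (Fin 3)) ×
    EuclideanSpace ℝ (Fin 3) => planeWave r.1 r.2 := by
  unfold planeWave
  fun_prop

/-- A product of plane waves separates into a temporal character of frequency
`-2π(|ξ|² - |η|²)` and a spatial one of frequency `ξ - η`. -/
lemma planeWave_mul_conj (p : ℝ × EuclideanSpace ℝ (Fin 3)) (ξ η : EuclideanSpace ℝ (Fin 3)) :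
    planeWave p ξ * (starRingEnd ℂ) (planeWave p η) =
      Complex.exp ((2 * Real.pi * inner ℝ (-(2 * Real.pi * (‖ξ‖ ^ 2 - ‖η‖ ^ 2))) p.1 : ℝ) *
        Complex.I) *
      Complex.exp ((2 * Real.pi * inner ℝ (ξ - η) p.2 : ℝ) * Complex.I) := by
  unfold planeWave
  rw [← Complex.exp_conj, ← Complex.exp_add, ← Complex.exp_add]
  congr 1
  simp only [map_mul, Complex.conj_ofReal, Complex.conj_I, inner_sub_left]
  simp
  ring

lemma integrable_window {f : EuclideanSpace ℝ (Fin 3) → ℂ} (hf : Integrable f)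
    {G : ℝ × EuclideanSpace ℝ (Fin 3) → ℝ} (hG : Integrable G) :
    Integrable (Function.uncurry fun (p : ℝ × EuclideanSpace ℝ (Fin 3))
      (q : EuclideanSpace ℝ (Fin 3) × EuclideanSpace ℝ (Fin 3)) =>
        (planeWave p q.1 * (starRingEnd ℂ) (planeWave p q.2)) *
          ((G p : ℂ) * (f q.1 * (starRingEnd ℂ) (f q.2)))) (volume.prod volume) := by
  have hconj : Integrable fun ξ => (starRingEnd ℂ) (f ξ) :=
    (Complex.conjCLE : ℂ →L[ℝ] ℂ).integrable_comp hf
  have hff : Integrable fun q : EuclideanSpace ℝ (Fin 3) × EuclideanSpace ℝ (Fin 3) =>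
      f q.1 * (starRingEnd ℂ) (f q.2) := hf.mul_prod hconj
  have h1 := (hG.ofReal (𝕜 := ℂ)).mul_prod hff
  have hc : Continuous fun r : (ℝ × EuclideanSpace ℝ (Fin 3)) ×
      (EuclideanSpace ℝ (Fin 3) × EuclideanSpace ℝ (Fin 3)) =>
      planeWave r.1 r.2.1 * (starRingEnd ℂ) (planeWave r.1 r.2.2) := by
    unfold planeWave
    fun_prop
  refine Integrable.bdd_mul (c := 1) h1 hc.aestronglyMeasurable ?_
  refine Filter.Eventually.of_forall fun r => ?_
  rw [norm_mul, RCLike.norm_conj, norm_planeWave, norm_planeWave, one_mul]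

/-- With Gaussian windows of width `b` in time and `a` in space, the mass of the superposition of
plane waves `∫ planeWave p ξ * f ξ` is a quadratic form in `f` whose kernel is the product of the
Fourier transforms of the two windows; the bound puts absolute values inside this form. -/
lemma windowed_mass_le {f : EuclideanSpace ℝ (Fin 3) → ℂ} (hf : Integrable f) {a b : ℝ}
    (ha : 0 < a) (hb : 0 < b) :
    ∫⁻ p : ℝ × EuclideanSpace ℝ (Fin 3),
        ENNReal.ofReal (Real.exp (-Real.pi * b⁻¹ ^ 2 * ‖p.1‖ ^ 2) *
          Real.exp (-Real.pi * a⁻¹ ^ 2 * ‖p.2‖ ^ 2) * ‖∫ ξ, planeWave p ξ * f ξ‖ ^ 2) ≤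
      ∫⁻ q : EuclideanSpace ℝ (Fin 3) × EuclideanSpace ℝ (Fin 3),
        ‖f q.1‖ₑ * ‖f q.2‖ₑ * ENNReal.ofReal (
          (b * Real.exp (-Real.pi * b ^ 2 * (2 * Real.pi * (‖q.1‖ ^ 2 - ‖q.2‖ ^ 2)) ^ 2)) *
          (a ^ 3 * Real.exp (-Real.pi * a ^ 2 * ‖q.1 - q.2‖ ^ 2))) := by
  set G : ℝ × EuclideanSpace ℝ (Fin 3) → ℝ := fun p =>
    Real.exp (-Real.pi * b⁻¹ ^ 2 * ‖p.1‖ ^ 2) * Real.exp (-Real.pi * a⁻¹ ^ 2 * ‖p.2‖ ^ 2) with hG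
  set U : ℝ × EuclideanSpace ℝ (Fin 3) → ℂ := fun p => ∫ ξ, planeWave p ξ * f ξ with hU
  have hGi : Integrable G := (integrable_gaussian_norm (V := ℝ) hb).mul_prod
    (integrable_gaussian_norm (V := EuclideanSpace ℝ (Fin 3)) ha)
  set Φ : ℝ × EuclideanSpace ℝ (Fin 3) →
      EuclideanSpace ℝ (Fin 3) × EuclideanSpace ℝ (Fin 3) → ℂ := fun p q =>
    (planeWave p q.1 * (starRingEnd ℂ) (planeWave p q.2)) *
      ((G p : ℂ) * (f q.1 * (starRingEnd ℂ) (f q.2))) with hΦ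
  have hΦi : Integrable (Function.uncurry Φ) (volume.prod volume) := integrable_window hf hGi
  -- integrating out the frequencies gives the windowed mass
  have hq : ∀ p, ∫ q, Φ p q = ((G p * ‖U p‖ ^ 2 : ℝ) : ℂ) := by
    intro p
    have : ∀ q, Φ p q = (G p : ℂ) * ((planeWave p q.1 * f q.1) *
        (starRingEnd ℂ) (planeWave p q.2 * f q.2)) := by
      intro q; simp only [hΦ, map_mul]; ring
    simp only [this]
    rw [integral_const_mul, Measure.volume_eq_prod, integral_prod_mul
      (fun ξ => planeWave p ξ * f ξ) (fun ξ => (starRingEnd ℂ) (planeWave p ξ * f ξ)),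
      integral_conj, Complex.mul_conj, Complex.normSq_eq_norm_sq]
    push_cast
    rfl
  -- integrating out space-time gives the Gaussian kernels
  have hp : ∀ q, ∫ p, Φ p q = (f q.1 * (starRingEnd ℂ) (f q.2)) *
      (((b * Real.exp (-Real.pi * b ^ 2 * (2 * Real.pi * (‖q.1‖ ^ 2 - ‖q.2‖ ^ 2)) ^ 2)) *
          (a ^ 3 * Real.exp (-Real.pi * a ^ 2 * ‖q.1 - q.2‖ ^ 2)) : ℝ) : ℂ) := by
    intro q
    have h1 := integral_gaussian_mul_phase (V := ℝ) hb
      (-(2 * Real.pi * (‖q.1‖ ^ 2 - ‖q.2‖ ^ 2)))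
    have h2 := integral_gaussian_mul_phase (V := EuclideanSpace ℝ (Fin 3)) ha (q.1 - q.2)
    simp only [Module.finrank_self, pow_one, finrank_euclideanSpace, Fintype.card_fin, norm_neg,
      Real.norm_eq_abs, sq_abs] at h1 h2
    rw [Complex.ofReal_mul, ← h1, ← h2, ← integral_prod_mul, ← Measure.volume_eq_prod,
      ← integral_const_mul]
    refine integral_congr_ae (Filter.Eventually.of_forall fun p => ?_)
    simp only [hΦ, hG, planeWave_mul_conj, Real.norm_eq_abs, sq_abs]
    push_cast
    ring
  have hint : Integrable fun p => G p * ‖U p‖ ^ 2 := by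
    have := hΦi.integral_prod_left
    simp only [Function.uncurry_apply_pair, hq] at this
    exact this.re
  have hnn : ∀ p, 0 ≤ G p * ‖U p‖ ^ 2 := fun p => by positivity
  calc ∫⁻ p, ENNReal.ofReal (G p * ‖U p‖ ^ 2)
      = ENNReal.ofReal (∫ p, G p * ‖U p‖ ^ 2) :=
        (ofReal_integral_eq_lintegral_ofReal hint (Filter.Eventually.of_forall hnn)).symm
    _ = ‖∫ p, ∫ q, Φ p q‖ₑ := by
        simp only [hq]
        rw [integral_complex_ofReal, ← ofReal_norm, Complex.norm_real,
          Real.norm_of_nonneg (integral_nonneg hnn)]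
    _ = ‖∫ q, ∫ p, Φ p q‖ₑ := by rw [integral_integral_swap hΦi]
    _ ≤ ∫⁻ q, ‖∫ p, Φ p q‖ₑ := enorm_integral_le_lintegral_enorm _
    _ = _ := by
        refine lintegral_congr fun q => ?_
        rw [hp, enorm_mul, enorm_mul, RCLike.enorm_conj, ← ofReal_norm (Complex.ofReal _),
          Complex.norm_real, Real.norm_of_nonneg (by positivity)]

/-! ### Schur's test and conclusion -/

/-- Schur's test for a symmetric nonnegative kernel. -/
lemma schur_symm_le {α : Type*} [MeasurableSpace α] {μ : Measure α} [SFinite μ]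
    {K : α → α → ℝ≥0∞} (hK : Measurable (Function.uncurry K)) (hsymm : ∀ x y, K x y = K y x)
    {C : ℝ≥0∞} (hC : ∀ x, ∫⁻ y, K x y ∂μ ≤ C) {g : α → ℝ≥0∞} (hg : Measurable g) :
    ∫⁻ x, ∫⁻ y, g x * g y * K x y ∂μ ∂μ ≤ C * ∫⁻ x, g x ^ 2 ∂μ := by
  have hxy : Measurable (Function.uncurry fun x y => g x ^ 2 * K x y) :=
    ((hg.comp measurable_fst).pow_const 2).mul hK
  have hyx : Measurable (Function.uncurry fun x y => g y ^ 2 * K x y) :=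
    ((hg.comp measurable_snd).pow_const 2).mul hK
  have hKx : ∀ x, Measurable (K x) := fun x => hK.comp measurable_prodMk_left
  have h1 : ∫⁻ x, ∫⁻ y, g x ^ 2 * K x y ∂μ ∂μ ≤ C * ∫⁻ x, g x ^ 2 ∂μ := by
    rw [← lintegral_const_mul _ (by fun_prop)]
    refine lintegral_mono fun x => ?_
    rw [lintegral_const_mul _ (hKx x), mul_comm]
    gcongr
    exact hC x
  have h2 : ∫⁻ x, ∫⁻ y, g y ^ 2 * K x y ∂μ ∂μ = ∫⁻ x, ∫⁻ y, g x ^ 2 * K x y ∂μ ∂μ := by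
    rw [lintegral_lintegral_swap hyx.aemeasurable]
    simp only [hsymm]
  have ham : ∀ a b : ℝ≥0∞, 2 * (a * b) ≤ a ^ 2 + b ^ 2 := by
    intro a b
    rcases eq_or_ne a ⊤ with rfl | ha
    · simp
    rcases eq_or_ne b ⊤ with rfl | hb
    · simp
    lift a to NNReal using ha
    lift b to NNReal using hb
    have := two_mul_le_add_sq a b
    rw [mul_assoc] at this
    exact_mod_cast this
  -- proved after doubling, to avoid halves in `ℝ≥0∞`
  have h3 : 2 * ∫⁻ x, ∫⁻ y, g x * g y * K x y ∂μ ∂μ ≤ 2 * (C * ∫⁻ x, g x ^ 2 ∂μ) := by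
    calc 2 * ∫⁻ x, ∫⁻ y, g x * g y * K x y ∂μ ∂μ
        = ∫⁻ x, ∫⁻ y, 2 * (g x * g y) * K x y ∂μ ∂μ := by
          rw [← lintegral_const_mul' _ _ (by simp)]
          refine lintegral_congr fun x => ?_
          rw [← lintegral_const_mul' _ _ (by simp)]
          simp only [mul_assoc]
      _ ≤ ∫⁻ x, ∫⁻ y, (g x ^ 2 * K x y + g y ^ 2 * K x y) ∂μ ∂μ := by
          refine lintegral_mono fun x => lintegral_mono fun y => ?_
          rw [← add_mul]
          gcongr
          exact ham _ _
      _ = ∫⁻ x, ∫⁻ y, g x ^ 2 * K x y ∂μ ∂μ + ∫⁻ x, ∫⁻ y, g y ^ 2 * K x y ∂μ ∂μ := by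
          rw [← lintegral_add_left hxy.lintegral_prod_right]
          refine lintegral_congr fun x => ?_
          exact lintegral_add_left ((hKx x).const_mul _) _
      _ ≤ _ := by
          rw [h2, ← two_mul]
          gcongr
  exact (ENNReal.mul_le_mul_iff_right (by simp) (by simp)).1 h3

open Real in
/-- The kernel obtained on the Fourier side from the weight `e^{-π t² / b²} |x|⁻²`: a Gaussian in
the energy difference times `π / |ξ - η|`, the Fourier transform of `|x|⁻²`. It is set to `0` on the
diagonal, a null set. -/
noncomputable def energyCoulombKernel (b : ℝ) (ξ η : EuclideanSpace ℝ (Fin 3)) : ℝ≥0∞ :=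
  ENNReal.ofReal (b * exp (-π * b ^ 2 * (2 * π * (‖ξ‖ ^ 2 - ‖η‖ ^ 2)) ^ 2)) *
    ENNReal.ofReal (π * ‖ξ - η‖⁻¹)

open Real in
lemma lintegral_energyCoulombKernel_le {b : ℝ} (hb : 0 < b) (ξ : EuclideanSpace ℝ (Fin 3)) :
    ∫⁻ η, energyCoulombKernel b ξ η ≤ ENNReal.ofReal π := by
  have hF : Measurable fun s : ℝ =>
    ENNReal.ofReal (b * exp (-π * b ^ 2 * (2 * π * (‖ξ‖ ^ 2 - s)) ^ 2)) := by fun_prop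
  have h := newton_radial_le hF ξ
  rw [lintegral_gaussian_energy hb] at h
  calc ∫⁻ η, energyCoulombKernel b ξ η
      = ENNReal.ofReal π * ∫⁻ η : EuclideanSpace ℝ (Fin 3),
        ENNReal.ofReal (b * exp (-π * b ^ 2 * (2 * π * (‖ξ‖ ^ 2 - ‖η‖ ^ 2)) ^ 2)) *
          ENNReal.ofReal (‖ξ - η‖⁻¹) := by
        rw [← lintegral_const_mul' _ _ (by simp)]
        refine lintegral_congr fun η => ?_
        rw [energyCoulombKernel, ENNReal.ofReal_mul pi_pos.le]
        ring
    _ ≤ ENNReal.ofReal π * (ENNReal.ofReal (2 * π) * ENNReal.ofReal ((2 * π)⁻¹)) := by gcongr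
    _ = ENNReal.ofReal π := by
        rw [← ENNReal.ofReal_mul (by positivity), mul_inv_cancel₀ (by positivity)]
        simp

lemma measurable_planeWave_integral {f : EuclideanSpace ℝ (Fin 3) → ℂ} (hf : Continuous f) :
    Measurable fun p : ℝ × EuclideanSpace ℝ (Fin 3) => ∫ ξ, planeWave p ξ * f ξ := by
  have hc : Continuous (Function.uncurry fun (p : ℝ × EuclideanSpace ℝ (Fin 3)) ξ =>
      planeWave p ξ * f ξ) :=
    continuous_planeWave.mul (hf.comp continuous_snd)
  exact (hc.stronglyMeasurable.integral_prod_right).measurable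

open Real Set in
/-- The smoothing estimate with a Gaussian window in time. The bound does not depend on the width
`b` of the window. -/
lemma time_windowed_le {f : EuclideanSpace ℝ (Fin 3) → ℂ} (hf : Integrable f)
    (hfc : Continuous f) {b : ℝ} (hb : 0 < b) :
    ∫⁻ p : ℝ × EuclideanSpace ℝ (Fin 3), ENNReal.ofReal (exp (-π * b⁻¹ ^ 2 * ‖p.1‖ ^ 2)) *
        ENNReal.ofReal (‖p.2‖⁻¹ ^ 2 * ‖∫ ξ, planeWave p ξ * f ξ‖ ^ 2) ≤
      ENNReal.ofReal π * ∫⁻ ξ, ‖f ξ‖ₑ ^ 2 := by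
  set U : ℝ × EuclideanSpace ℝ (Fin 3) → ℂ := fun p => ∫ ξ, planeWave p ξ * f ξ with hU
  have hUm : Measurable U := measurable_planeWave_integral hfc
  have hfm : Measurable f := hfc.measurable
  calc ∫⁻ p : ℝ × EuclideanSpace ℝ (Fin 3), ENNReal.ofReal (exp (-π * b⁻¹ ^ 2 * ‖p.1‖ ^ 2)) *
        ENNReal.ofReal (‖p.2‖⁻¹ ^ 2 * ‖U p‖ ^ 2)
      ≤ ∫⁻ p : ℝ × EuclideanSpace ℝ (Fin 3), ∫⁻ a in Ioi (0 : ℝ),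
          ENNReal.ofReal (2 * π * a⁻¹ ^ 3) * ENNReal.ofReal (exp (-π * b⁻¹ ^ 2 * ‖p.1‖ ^ 2) *
            exp (-π * a⁻¹ ^ 2 * ‖p.2‖ ^ 2) * ‖U p‖ ^ 2) := by
        refine lintegral_mono fun p => ?_
        rcases (norm_nonneg p.2).eq_or_lt with h | h
        -- at `x = 0` the weight is `0⁻¹ = 0`
        · simp [← h]
        · rw [ENNReal.ofReal_mul (by positivity), inv_sq_eq_lintegral h,
            ← lintegral_mul_const' _ _ (by simp), ← lintegral_const_mul' _ _ (by simp)]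
          refine (setLIntegral_congr_fun measurableSet_Ioi fun a ha => ?_).le
          have ha : 0 < a := ha
          rw [← ENNReal.ofReal_mul (by positivity), ← ENNReal.ofReal_mul (by positivity),
            ← ENNReal.ofReal_mul (by positivity)]
          congr 1
          ring
    _ = ∫⁻ a in Ioi (0 : ℝ), ∫⁻ p : ℝ × EuclideanSpace ℝ (Fin 3),
          ENNReal.ofReal (2 * π * a⁻¹ ^ 3) * ENNReal.ofReal (exp (-π * b⁻¹ ^ 2 * ‖p.1‖ ^ 2) *
            exp (-π * a⁻¹ ^ 2 * ‖p.2‖ ^ 2) * ‖U p‖ ^ 2) := by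
        refine lintegral_lintegral_swap (Measurable.aemeasurable ?_)
        unfold Function.uncurry
        fun_prop
    _ ≤ ∫⁻ a in Ioi (0 : ℝ), ∫⁻ q : EuclideanSpace ℝ (Fin 3) × EuclideanSpace ℝ (Fin 3),
          ‖f q.1‖ₑ * ‖f q.2‖ₑ * (ENNReal.ofReal
            (b * exp (-π * b ^ 2 * (2 * π * (‖q.1‖ ^ 2 - ‖q.2‖ ^ 2)) ^ 2)) *
            ENNReal.ofReal (2 * π * exp (-π * a ^ 2 * ‖q.1 - q.2‖ ^ 2))) := by
        refine setLIntegral_mono' measurableSet_Ioi fun a ha => ?_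
        have ha : 0 < a := ha
        rw [lintegral_const_mul' _ _ (by simp)]
        refine (mul_le_mul_right (windowed_mass_le hf ha hb) _).trans ?_
        rw [← lintegral_const_mul' _ _ (by simp)]
        refine (lintegral_congr fun q => ?_).le
        rw [mul_left_comm]
        congr 1
        rw [← ENNReal.ofReal_mul (by positivity), ← ENNReal.ofReal_mul (by positivity)]
        congr 1
        field_simp
    _ = ∫⁻ q : EuclideanSpace ℝ (Fin 3) × EuclideanSpace ℝ (Fin 3), ∫⁻ a in Ioi (0 : ℝ),
          ‖f q.1‖ₑ * ‖f q.2‖ₑ * (ENNReal.ofReal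
            (b * exp (-π * b ^ 2 * (2 * π * (‖q.1‖ ^ 2 - ‖q.2‖ ^ 2)) ^ 2)) *
            ENNReal.ofReal (2 * π * exp (-π * a ^ 2 * ‖q.1 - q.2‖ ^ 2))) := by
        refine lintegral_lintegral_swap (Measurable.aemeasurable ?_)
        unfold Function.uncurry
        fun_prop
    _ = ∫⁻ ξ, ∫⁻ η, ∫⁻ a in Ioi (0 : ℝ), ‖f ξ‖ₑ * ‖f η‖ₑ * (ENNReal.ofReal
            (b * exp (-π * b ^ 2 * (2 * π * (‖ξ‖ ^ 2 - ‖η‖ ^ 2)) ^ 2)) *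
            ENNReal.ofReal (2 * π * exp (-π * a ^ 2 * ‖ξ - η‖ ^ 2))) := by
        rw [Measure.volume_eq_prod, lintegral_prod]
        refine (Measurable.lintegral_prod_right ?_).aemeasurable
        unfold Function.uncurry
        fun_prop
    _ = ∫⁻ ξ, ∫⁻ η, ‖f ξ‖ₑ * ‖f η‖ₑ * energyCoulombKernel b ξ η := by
        refine lintegral_congr fun ξ => lintegral_congr_ae ?_
        have hae : ∀ᵐ η : EuclideanSpace ℝ (Fin 3), η ≠ ξ := by simp [ae_iff]
        filter_upwards [hae] with η hη
        rw [lintegral_const_mul' _ _ (ENNReal.mul_ne_top (by simp) (by simp)),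
          lintegral_const_mul' _ _ (by simp),
          lintegral_gaussian_scale (norm_pos_iff.2 (sub_ne_zero.2 hη.symm)), energyCoulombKernel]
    _ ≤ _ := by
        refine schur_symm_le ?_ ?_ (lintegral_energyCoulombKernel_le hb) hfm.enorm
        · unfold energyCoulombKernel Function.uncurry
          fun_prop
        · intro ξ η
          simp only [energyCoulombKernel]
          rw [norm_sub_rev]
          ring_nf

open Real Filter Topology in
/-- The time window is removed by Fatou's lemma along `b = n + 1`. -/
lemma kato_planeWave {f : EuclideanSpace ℝ (Fin 3) → ℂ} (hf : Integrable f)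
    (hfc : Continuous f) :
    ∫⁻ t : ℝ, ∫⁻ x : EuclideanSpace ℝ (Fin 3),
        ENNReal.ofReal (‖x‖⁻¹ ^ 2 * ‖∫ ξ, planeWave (t, x) ξ * f ξ‖ ^ 2) ≤
      ENNReal.ofReal π * ∫⁻ ξ, ‖f ξ‖ₑ ^ 2 := by
  have hUm := measurable_planeWave_integral hfc
  set U : ℝ × EuclideanSpace ℝ (Fin 3) → ℂ := fun p => ∫ ξ, planeWave p ξ * f ξ with hU
  set H : ℝ × EuclideanSpace ℝ (Fin 3) → ℝ≥0∞ := fun p =>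
    ENNReal.ofReal (‖p.2‖⁻¹ ^ 2 * ‖U p‖ ^ 2) with hH
  have hHm : Measurable H := by fun_prop
  set w : ℕ → ℝ × EuclideanSpace ℝ (Fin 3) → ℝ≥0∞ := fun n p =>
    ENNReal.ofReal (exp (-π * ((n : ℝ) + 1)⁻¹ ^ 2 * ‖p.1‖ ^ 2)) with hw
  have hlim : ∀ p, Tendsto (fun n => w n p * H p) atTop (𝓝 (H p)) := by
    intro p
    have h1 : Tendsto (fun n : ℕ => ((n : ℝ) + 1)⁻¹) atTop (𝓝 0) := by
      simpa using tendsto_one_div_add_atTop_nhds_zero_nat (𝕜 := ℝ)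
    have h2 : Tendsto (fun n => w n p) atTop (𝓝 1) := by
      have h3 : Continuous fun y : ℝ => ENNReal.ofReal (exp (-π * y ^ 2 * ‖p.1‖ ^ 2)) :=
        ENNReal.continuous_ofReal.comp (by fun_prop)
      have h4 := (h3.tendsto 0).comp h1
      have h5 : ENNReal.ofReal (exp (-π * (0 : ℝ) ^ 2 * ‖p.1‖ ^ 2)) = 1 := by simp
      rw [h5] at h4
      exact h4
    simpa using ENNReal.Tendsto.mul_const h2 (Or.inl one_ne_zero)
  calc ∫⁻ t : ℝ, ∫⁻ x : EuclideanSpace ℝ (Fin 3), H (t, x)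
      = ∫⁻ p, H p := by rw [Measure.volume_eq_prod, lintegral_prod _ hHm.aemeasurable]
    _ = ∫⁻ p, liminf (fun n => w n p * H p) atTop :=
        lintegral_congr fun p => (hlim p).liminf_eq.symm
    _ ≤ liminf (fun n => ∫⁻ p, w n p * H p) atTop :=
        lintegral_liminf_le fun n => by fun_prop
    _ ≤ liminf (fun _ : ℕ => ENNReal.ofReal π * ∫⁻ ξ, ‖f ξ‖ₑ ^ 2) atTop :=
        liminf_le_liminf (Eventually.of_forall fun n => time_windowed_le hf hfc (by positivity))
    _ = _ := liminf_const _

lemma SchwartzMap.lintegral_norm_sq_fourier (ψ : SchwartzMap (EuclideanSpace ℝ (Fin 3)) ℂ) :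
    ∫⁻ ξ, ‖𝓕 ψ ξ‖ₑ ^ 2 = ∫⁻ x, ENNReal.ofReal (‖ψ x‖ ^ 2) := by
  have hi : ∀ g : SchwartzMap (EuclideanSpace ℝ (Fin 3)) ℂ, Integrable fun x => ‖g x‖ ^ 2 :=
    fun g => (memLp_two_iff_integrable_sq_norm g.continuous.aestronglyMeasurable).1 (g.memLp 2)
  have h : ∀ ξ, ‖𝓕 ψ ξ‖ₑ ^ 2 = ENNReal.ofReal (‖𝓕 ψ ξ‖ ^ 2) := fun ξ => by
    rw [ENNReal.ofReal_pow (norm_nonneg _), ofReal_norm]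
  simp only [h]
  rw [← ofReal_integral_eq_lintegral_ofReal (hi _) (Filter.Eventually.of_forall fun _ => by
      positivity), ← ofReal_integral_eq_lintegral_ofReal (hi _)
      (Filter.Eventually.of_forall fun _ => by positivity), SchwartzMap.integral_norm_sq_fourier]

/-- Kato smoothing estimate: if `ψ` is a Schwartz function on `ℝ³` and `u t = e^{itΔ}ψ` is its
free Schrödinger evolution (characterized on the Fourier side by
`𝓕(u t)(ξ) = e^{-4π²it|ξ|²} 𝓕ψ(ξ)`), then
`∫_ℝ ∫_{ℝ³} |x|⁻² |u(t,x)|² dx dt ≤ π ∫_{ℝ³} |ψ(x)|² dx`. -/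
theorem kato_smoothing (ψ : SchwartzMap (EuclideanSpace ℝ (Fin 3)) ℂ)
    (u : ℝ → SchwartzMap (EuclideanSpace ℝ (Fin 3)) ℂ)
    (hu : ∀ (t : ℝ) (ξ : EuclideanSpace ℝ (Fin 3)),
      𝓕 (⇑(u t)) ξ =
        Complex.exp (-(4 * Real.pi ^ 2 * t * ‖ξ‖ ^ 2 : ℝ) * Complex.I) * 𝓕 (⇑ψ) ξ) :
    ∫⁻ t : ℝ, ∫⁻ x, ENNReal.ofReal (‖x‖⁻¹ ^ 2 * ‖u t x‖ ^ 2) ≤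
      ENNReal.ofReal Real.pi * ∫⁻ x, ENNReal.ofReal (‖ψ x‖ ^ 2) := by
  have hrep : ∀ t x, u t x = ∫ ξ, planeWave (t, x) ξ * 𝓕 ψ ξ := by
    intro t x
    have h1 : 𝓕⁻ (𝓕 (⇑(u t))) = ⇑(u t) :=
      (u t).continuous.fourierInv_fourier_eq (u t).integrable
        (by rw [← SchwartzMap.fourier_coe]; exact (𝓕 (u t)).integrable)
    rw [← h1, Real.fourierInv_eq']
    refine integral_congr_ae (Filter.Eventually.of_forall fun ξ => ?_)
    simp only [hu, smul_eq_mul, planeWave, SchwartzMap.fourier_coe]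
    rw [← mul_assoc, ← Complex.exp_add]
    congr 2
    push_cast
    ring
  simp only [hrep]
  rw [← SchwartzMap.lintegral_norm_sq_fourier]
  exact kato_planeWave (𝓕 ψ).integrable (𝓕 ψ).continuous
end

section
/- For all natural numbers p and L and every real number x with 0 ≤ x < 1, ∑_{k=0}^∞ (p + k)^L x^k ≤ e^p · L! / (1 - x)^{L+1}. -/
/-!
For `p = 0`, the bound `k ^ j ≤ (k + 1) ⋯ (k + j) = j! * (k + j).choose j` and the negative binomial
series give `∑ k ^ j x ^ k ≤ j! / (1 - x) ^ (j + 1)`. For general `p`, expand `(p + k) ^ L` by the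
binomial theorem: since `L.choose m * (L - m)! = L! / m!`, the sum is at most
`∑_{m ≤ L} (p ^ m / m!) * L! / (1 - x) ^ (L - m + 1)`. Each power of `1 - x` is at least
`(1 - x) ^ (L + 1)`, and what remains is a partial sum of the exponential series at `p`.
-/

open scoped BigOperators

lemma pow_le_factorial_mul_choose (k j : ℕ) :
    (k : ℝ) ^ j ≤ j.factorial * ((k + j).choose j : ℝ) := by
  have h : k ^ j ≤ j.factorial * (k + j).choose j := by
    rw [← Nat.ascFactorial_eq_factorial_mul_choose]
    exact (Nat.pow_le_pow_left (Nat.le_succ k) j).trans (Nat.pow_succ_le_ascFactorial _ _)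
  exact_mod_cast h

lemma summable_pow_mul (j : ℕ) {x : ℝ} (hx0 : 0 ≤ x) (hx1 : x < 1) :
    Summable fun k : ℕ => (k : ℝ) ^ j * x ^ k :=
  summable_pow_mul_geometric_of_norm_lt_one j (by rwa [Real.norm_of_nonneg hx0])

/-- The case `p = 0` of the estimate. -/
lemma tsum_pow_mul_le (j : ℕ) {x : ℝ} (hx0 : 0 ≤ x) (hx1 : x < 1) :
    ∑' k : ℕ, (k : ℝ) ^ j * x ^ k ≤ j.factorial / (1 - x) ^ (j + 1) := by
  have h := (hasSum_choose_mul_geometric_of_norm_lt_one j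
    (show ‖x‖ < 1 by rwa [Real.norm_of_nonneg hx0])).mul_left (j.factorial : ℝ)
  rw [mul_one_div] at h
  refine hasSum_le (fun k => ?_) (summable_pow_mul j hx0 hx1).hasSum h
  rw [← mul_assoc]
  exact mul_le_mul_of_nonneg_right (pow_le_factorial_mul_choose k j) (pow_nonneg hx0 k)

/-- For all naturals `p`, `L` and every real `x` with `0 ≤ x < 1`,
`∑_{k=0}^∞ (p + k)^L x^k ≤ e^p · L! / (1 - x)^(L+1)`. -/
theorem series_estimate (p L : ℕ) (x : ℝ) (hx0 : 0 ≤ x) (hx1 : x < 1) :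
    ∑' k : ℕ, ((p + k : ℝ)) ^ L * x ^ k ≤
      Real.exp p * (Nat.factorial L) / (1 - x) ^ (L + 1) := by
  have h1x : 0 < 1 - x := by linarith
  have hexpand : ∀ k : ℕ, ((p + k : ℝ)) ^ L * x ^ k =
      ∑ m ∈ Finset.range (L + 1),
        (p : ℝ) ^ m * (L.choose m : ℝ) * ((k : ℝ) ^ (L - m) * x ^ k) := by
    intro k
    rw [add_pow, Finset.sum_mul]
    exact Finset.sum_congr rfl fun m _ => by ring
  simp_rw [hexpand]
  rw [Summable.tsum_finsetSum fun m _ => (summable_pow_mul (L - m) hx0 hx1).mul_left _]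
  have hterm : ∀ m ∈ Finset.range (L + 1),
      ∑' k : ℕ, (p : ℝ) ^ m * (L.choose m : ℝ) * ((k : ℝ) ^ (L - m) * x ^ k) ≤
        (p : ℝ) ^ m / m.factorial * (L.factorial / (1 - x) ^ (L + 1)) := by
    intro m hm
    have hmL : m ≤ L := Nat.lt_succ_iff.mp (Finset.mem_range.mp hm)
    have hfac : (L.choose m : ℝ) * m.factorial * (L - m).factorial = L.factorial := by
      exact_mod_cast Nat.choose_mul_factorial_mul_factorial hmL
    have hm0 : (m.factorial : ℝ) ≠ 0 := by positivity
    rw [tsum_mul_left]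
    calc (p : ℝ) ^ m * (L.choose m : ℝ) * ∑' k : ℕ, (k : ℝ) ^ (L - m) * x ^ k
        ≤ (p : ℝ) ^ m * (L.choose m : ℝ) * ((L - m).factorial / (1 - x) ^ (L - m + 1)) := by
          gcongr
          exact tsum_pow_mul_le _ hx0 hx1
      _ ≤ (p : ℝ) ^ m * (L.choose m : ℝ) * ((L - m).factorial / (1 - x) ^ (L + 1)) := by
          have := pow_le_pow_of_le_one h1x.le (by linarith) (show L - m + 1 ≤ L + 1 by omega)
          gcongr
      _ = _ := by
          rw [← hfac]
          field_simp
  calc _ ≤ ∑ m ∈ Finset.range (L + 1),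
        (p : ℝ) ^ m / m.factorial * (L.factorial / (1 - x) ^ (L + 1)) := Finset.sum_le_sum hterm
    _ ≤ Real.exp p * (L.factorial / (1 - x) ^ (L + 1)) := by
        rw [← Finset.sum_mul]
        gcongr
        exact Real.sum_le_exp_of_nonneg (Nat.cast_nonneg p) _
    _ = _ := (mul_div_assoc _ _ _).symm
end

section
/- Fix natural numbers p ≤ N. For a function i : Fin N → Fin N let ε(i) ∈ {-1, 0, 1} be the sign of the corresponding permutation if i is bijective and 0 otherwise. For functions a, b : Fin p → Fin N define ε^b_a := sgn(σ) if a is injective and there exists a permutation σ of Fin p with a = b ∘ σ, and ε^b_a := 0 otherwise. Then for all a, b : Fin p → Fin N, ∑_{c : Fin (N-p) → Fin N} ε(a ⊔ c) · ε(b ⊔ c) = (N-p)! · ε^b_a, where a ⊔ c : Fin N → Fin N denotes the concatenation of a and c under the canonical equivalence Fin p ⊕ Fin (N-p) ≃ Fin N. -/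
/-! Write `N = p + m`. The proof splits on whether `a` is an injective rearrangement `b ∘ σ` of `b`.

If it is, then `a ⊔ c` is `b ⊔ c` precomposed with `σ ⊕ 1`, so `ε(a ⊔ c) = sgn σ · ε(b ⊔ c)`
(`leviCivita_comp_perm`, `append_comp_perm`), and each summand is `sgn σ · ε(b ⊔ c)²`. The square
is the indicator that `b ⊔ c` is injective, i.e. that `c` is an injection of `Fin m` into the
complement of the range of `b`. That complement has `m` elements, so there are `m!` such `c`
(`card_append_injective`).

If it is not, every summand vanishes: if `a ⊔ c` and `b ⊔ c` were both bijective, then `a` and `b`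
would be injective with range the complement of the range of `c`, hence rearrangements of each
other (`exists_perm_of_append_injective`). -/

open scoped BigOperators

/-- The Levi-Civita symbol of a function `i : Fin N → Fin N`: the sign of the corresponding
permutation if `i` is bijective, and `0` otherwise. -/
noncomputable def leviCivita {N : ℕ} (i : Fin N → Fin N) : ℤ :=
  if h : Function.Bijective i then ((Equiv.Perm.sign (Equiv.ofBijective i h) : ℤˣ) : ℤ) else 0

/-- The relative symbol `ε^b_a` of two tuples `a b : Fin p → Fin N`: equal to `sgn σ` if `a`
is injective and there is a permutation `σ` of `Fin p` with `a = b ∘ σ`, and `0` otherwise. -/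
noncomputable def epsPair {N p : ℕ} (a b : Fin p → Fin N) : ℤ :=
  if h : Function.Injective a ∧ ∃ σ : Equiv.Perm (Fin p), a = b ∘ σ then
    ((Equiv.Perm.sign h.2.choose : ℤˣ) : ℤ)
  else 0

lemma leviCivita_of_not_injective {N : ℕ} {i : Fin N → Fin N} (h : ¬ Function.Injective i) :
    leviCivita i = 0 :=
  dif_neg fun hb => h hb.1

lemma leviCivita_coe_perm {N : ℕ} (τ : Equiv.Perm (Fin N)) :
    leviCivita (τ : Fin N → Fin N) = (Equiv.Perm.sign τ : ℤ) := by
  rw [leviCivita, dif_pos τ.bijective]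
  congr 2
  ext x
  simp

lemma leviCivita_comp_perm {N : ℕ} (i : Fin N → Fin N) (τ : Equiv.Perm (Fin N)) :
    leviCivita (i ∘ τ) = (Equiv.Perm.sign τ : ℤ) * leviCivita i := by
  by_cases h : Function.Injective i
  · obtain ⟨ρ, rfl⟩ : ∃ ρ : Equiv.Perm (Fin N), i = ρ :=
      ⟨Equiv.ofBijective i (Finite.injective_iff_bijective.1 h), rfl⟩
    rw [← Equiv.Perm.coe_mul, leviCivita_coe_perm, leviCivita_coe_perm, Equiv.Perm.sign_mul,
      Units.val_mul, mul_comm]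
  · rw [leviCivita_of_not_injective h, leviCivita_of_not_injective, mul_zero]
    rwa [τ.injective_comp]

open Classical in
lemma leviCivita_mul_self {N : ℕ} (i : Fin N → Fin N) :
    leviCivita i * leviCivita i = if Function.Injective i then 1 else 0 := by
  split_ifs with h
  · rw [leviCivita, dif_pos (Finite.injective_iff_bijective.1 h), ← Units.val_mul,
      Int.units_mul_self, Units.val_one]
  · rw [leviCivita_of_not_injective h, mul_zero]

/-- The permutation `σ ⊕ 1` of `Fin (p + m)`, acting by `σ` on the first `p` indices. -/
def permExtend {p : ℕ} (m : ℕ) (σ : Equiv.Perm (Fin p)) : Equiv.Perm (Fin (p + m)) :=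
  finSumFinEquiv.permCongr (Equiv.Perm.sumCongr σ 1)

lemma sign_permExtend {p m : ℕ} (σ : Equiv.Perm (Fin p)) :
    Equiv.Perm.sign (permExtend m σ) = Equiv.Perm.sign σ := by
  simp [permExtend]

lemma append_comp_perm {p m : ℕ} {α : Type*} (b : Fin p → α) (c : Fin m → α)
    (σ : Equiv.Perm (Fin p)) :
    Fin.append (b ∘ σ) c = Fin.append b c ∘ permExtend m σ := by
  ext k
  refine Fin.addCases (fun k => ?_) (fun k => ?_) k <;> simp [permExtend, Equiv.permCongr_apply]

/-- An injective `b` extends to an injective `b ⊔ c` in `m!` ways: such `c` are the embeddings of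
`Fin m` into the `m`-element complement of the range of `b`. -/
lemma card_append_injective {p m : ℕ} {b : Fin p → Fin (p + m)} (hb : Function.Injective b) :
    Nat.card {c : Fin m → Fin (p + m) // Function.Injective (Fin.append b c)} = m.factorial := by
  classical
  let e : {c : Fin m → Fin (p + m) // Function.Injective (Fin.append b c)} ≃
      (Fin m ↪ ((Set.range b)ᶜ : Set (Fin (p + m)))) :=
    { toFun := fun c =>
        ⟨fun k => ⟨c.1 k, fun ⟨j, hj⟩ => (Fin.append_injective_iff.1 c.2).2.2 j k hj⟩,
          fun k l hkl => (Fin.append_injective_iff.1 c.2).2.1 (congrArg Subtype.val hkl)⟩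
      invFun := fun f =>
        ⟨fun k => f k, Fin.append_injective_iff.2
          ⟨hb, fun k l hkl => f.injective (Subtype.ext hkl), fun j k hjk => (f k).2 ⟨j, hjk⟩⟩⟩
      left_inv := fun _ => rfl
      right_inv := fun _ => rfl }
  rw [Nat.card_congr e, Nat.card_eq_fintype_card, Fintype.card_embedding_eq,
    Fintype.card_compl_set, Set.card_range_of_injective hb]
  simp [Nat.descFactorial_self]

lemma exists_perm_of_append_injective {p m : ℕ} {a b : Fin p → Fin (p + m)}
    {c : Fin m → Fin (p + m)} (ha : Function.Injective (Fin.append a c))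
    (hb : Function.Injective (Fin.append b c)) : ∃ σ : Equiv.Perm (Fin p), a = b ∘ σ := by
  have ha' := Fin.append_injective_iff.1 ha
  -- A value of `a` is attained by the surjection `b ⊔ c`, but not on the `c` part.
  have key : ∀ i, ∃ j, b j = a i := by
    intro i
    obtain ⟨k, hk⟩ := (Finite.injective_iff_surjective.1 hb) (a i)
    induction k using Fin.addCases with
    | left j => exact ⟨j, by simpa using hk⟩
    | right j => exact absurd (by simpa using hk.symm) (ha'.2.2 i j)
  choose s hs using key
  have hinj : Function.Injective s := fun i j hij => ha'.1 (by rw [← hs i, ← hs j, hij])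
  exact ⟨Equiv.ofBijective s (Finite.injective_iff_bijective.1 hinj), funext fun i => (hs i).symm⟩

/-- The contraction identity for `N = p + m`, where no index cast is needed. -/
lemma leviCivita_contraction_add (p m : ℕ) (a b : Fin p → Fin (p + m)) :
    ∑ c : Fin m → Fin (p + m), leviCivita (Fin.append a c) * leviCivita (Fin.append b c) =
      (m.factorial : ℤ) * epsPair a b := by
  classical
  unfold epsPair
  split_ifs with h
  · -- Whichever witness the definition of `epsPair` chooses, only `a = b ∘ σ` is used.
    generalize_proofs hσ
    have hab := hσ.choose_spec
    generalize hσ.choose = σ at hab ⊢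
    have hb : Function.Injective b := by
      have := h.1
      rwa [hab, σ.injective_comp] at this
    simp_rw [hab, append_comp_perm, leviCivita_comp_perm, sign_permExtend, mul_assoc,
      leviCivita_mul_self, ← Finset.mul_sum, Finset.sum_boole, ← Fintype.card_subtype,
      ← Nat.card_eq_fintype_card, card_append_injective hb]
    exact mul_comm _ _
  · rw [mul_zero]
    refine Finset.sum_eq_zero fun c _ => ?_
    by_cases ha : Function.Injective (Fin.append a c)
    · by_cases hb : Function.Injective (Fin.append b c)
      · exact absurd ⟨(Fin.append_injective_iff.1 ha).1, exists_perm_of_append_injective ha hb⟩ h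
      · rw [leviCivita_of_not_injective hb, mul_zero]
    · rw [leviCivita_of_not_injective ha, zero_mul]

lemma leviCivita_contraction_cast (N p m : ℕ) (h : N = p + m) (a b : Fin p → Fin N) :
    ∑ c : Fin m → Fin N,
        leviCivita (fun k => Fin.append a c (Fin.cast h k)) *
          leviCivita (fun k => Fin.append b c (Fin.cast h k)) =
      (m.factorial : ℤ) * epsPair a b := by
  subst h
  exact leviCivita_contraction_add p m a b

/-- Levi-Civita contraction identity:
`∑_c ε(a ⊔ c) · ε(b ⊔ c) = (N-p)! · ε^b_a`. -/
theorem leviCivita_contraction (N p : ℕ) (hpN : p ≤ N) (a b : Fin p → Fin N) :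
    ∑ c : Fin (N - p) → Fin N,
        leviCivita (fun k => Fin.append a c (Fin.cast (by omega) k)) *
          leviCivita (fun k => Fin.append b c (Fin.cast (by omega) k)) =
      ((N - p).factorial : ℤ) * epsPair a b :=
  leviCivita_contraction_cast N p (N - p) (by omega) a b
end
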